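/- Let I be the defining ideal of a star configuration S_N(e,s) in P^N built from s hyperplanes with defining linear forms in general position, where 1 ≤ e ≤ min(N,s). Then the Waldschmidt constant of I equals s/e, i.e. inf_{k≥1} α(I^{(k)})/k = s/e. -/

import Mathlib

noncomputable section

open MvPolynomial

/-- `alpha J` is the least degree of a nonzero homogeneous form in the ideal `J`. -/
def alpha {kk : Type*} [Field kk] {σ : Type*} (J : Ideal (MvPolynomial σ kk)) : ℕ :=
  sInf {d : ℕ | ∃ f ∈ J, f ≠ 0 ∧ MvPolynomial.IsHomogeneous f d}

/-!
Let `F ≠ 0` be a form of degree `d` in `I^(k)`, and let `ℓ i ^ a i` be the exact power of `ℓ i`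
dividing `F`. The coefficient of `ℓ i ^ a i` in the expansion of `F` in powers of `ℓ i` is a nonzero
form of degree `d - a i` on the hyperplane `ℓ i = 0`, lying in the `(k - a i)`-th symbolic power for
the star configuration of codimension `e - 1` cut out there by the other `s - 1` hyperplanes.
By induction on `e`, `(s - 1) (k - a i) ≤ (d - a i) (e - 1)`. Since the `ℓ i` are pairwise coprime,
`∑ a i ≤ d`, so summing over `i` gives `s k ≤ d e`; for `e = 1`, where `k ≤ a i`, this is immediate.
Equality holds for `F = ∏ ℓ i` and `k = e`.
-/

section GeneralFacts

lemma linearIndepOn_sub_smul_of_insert {R M ι : Type*} [Ring R] [AddCommGroup M] [Module R M]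
    {v : ι → M} {i : ι} {s : Set ι} (hi : i ∉ s) (hv : LinearIndepOn R v (insert i s))
    (c : ι → R) : LinearIndepOn R (fun j => v j - c j • v i) s := by
  classical
  have hupdate : LinearIndepOn R (fun j => v j + Function.update (-c) i 0 j • v i) (insert i s) :=
    (linearIndependent_add_smul_iff (v := fun j : ↥(insert i s) => v j)
      (i := ⟨i, s.mem_insert i⟩) (c := fun j => Function.update (-c) i 0 j) (by simp)).2 hv
  refine (hupdate.mono (s.subset_insert i)).congr fun j hj => ?_
  simp [Function.update_of_ne (ne_of_mem_of_not_mem hj hi), sub_eq_add_neg]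

lemma coeff_mem_pow_sub_of_mem_map_C_sup_span_X_pow {A : Type*} [CommRing A] {J : Ideal A} {k : ℕ}
    {p : Polynomial A} (hp : p ∈ (J.map Polynomial.C ⊔ Ideal.span {Polynomial.X}) ^ k) (i : ℕ) :
    p.coeff i ∈ J ^ (k - i) := by
  have coeff_zero_mem : J.map Polynomial.C ⊔ Ideal.span {Polynomial.X} ≤
      J.comap Polynomial.constantCoeff := by
    rw [sup_le_iff, Ideal.map_le_iff_le_comap, Ideal.span_le, Set.singleton_subset_iff]
    exact ⟨fun x hx => by simpa using hx, by simp⟩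
  induction hp using Submodule.pow_induction_on_left' generalizing i with
  | algebraMap r => simp
  | add p q k _ _ hp hq => simpa using add_mem (hp i) (hq i)
  | mem_mul q hq k p _ hp =>
    rw [Polynomial.coeff_mul]
    refine sum_mem fun ⟨a, b⟩ hab => ?_
    obtain rfl := Finset.HasAntidiagonal.mem_antidiagonal.1 hab
    rcases a with _ | a
    · have hq0 : q.coeff 0 ∈ J := coeff_zero_mem hq
      have hmul : q.coeff 0 * p.coeff b ∈ J ^ (k - b + 1) :=
        pow_succ' J (k - b) ▸ Ideal.mul_mem_mul hq0 (hp b)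
      exact Ideal.pow_le_pow_right (by lia) hmul
    · exact Ideal.mul_mem_left _ _ (Ideal.pow_le_pow_right (by lia) (hp b))

lemma isHomogeneous_coeff_optionEquivLeft {R σ : Type*} [CommSemiring R] {d i j : ℕ}
    {f : MvPolynomial (Option σ) R} (hf : f.IsHomogeneous d) (hij : i + j = d) :
    ((optionEquivLeft R σ f).coeff i).IsHomogeneous j := by
  intro m hm
  rw [optionEquivLeft_coeff_coeff] at hm
  have hweight := hf hm
  simp only [Finsupp.weight_apply, Pi.one_apply, smul_eq_mul, mul_one] at hweight ⊢
  rw [Finsupp.sum_option_index _ _ (fun _ => rfl) (fun _ _ _ => rfl), Finsupp.some_optionElim,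
    Finsupp.optionElim_apply_none] at hweight
  lia

lemma optionEquivLeft_rename_some {R σ : Type*} [CommSemiring R] (f : MvPolynomial σ R) :
    optionEquivLeft R σ (rename some f) = Polynomial.C f := by
  induction f using MvPolynomial.induction_on with
  | C a => simp
  | add f g hf hg => simp [hf, hg]
  | mul_X f j hf => simp [hf, optionEquivLeft_X_some]

lemma degree_le_degree_of_dvd {R σ : Type*} [CommRing R] [IsDomain R] {F G : MvPolynomial σ R}
    {m d : ℕ} (hG : G.IsHomogeneous m) (hF : F.IsHomogeneous d) (hF0 : F ≠ 0)
    (hdvd : G ∣ F) : m ≤ d := by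
  rw [← hG.totalDegree (ne_zero_of_dvd_ne_zero hF0 hdvd), ← hF.totalDegree hF0]
  exact totalDegree_le_of_dvd_of_isDomain hdvd hF0

end GeneralFacts

section LinearForms

variable {K σ : Type*} [Field K]

lemma exists_eval_eq_one_of_isHomogeneous_one {l : MvPolynomial σ K} (hl : l.IsHomogeneous 1)
    (hl0 : l ≠ 0) : ∃ μ : σ → K, eval μ l = 1 := by
  classical
  rw [← mem_homogeneousSubmodule, homogeneousSubmodule_one_eq_span_X,
    Finsupp.mem_span_range_iff_exists_finsupp] at hl
  obtain ⟨c, rfl⟩ := hl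
  obtain ⟨j, hj⟩ : ∃ j, c j ≠ 0 := by
    by_contra! hc
    exact hl0 (by simp [show c = 0 from Finsupp.ext hc])
  refine ⟨Pi.single j (c j)⁻¹, ?_⟩
  simp [Finsupp.sum, map_sum, Pi.single_apply, smul_eval, hj]

lemma irreducible_of_isHomogeneous_one {l : MvPolynomial σ K} (hl : l.IsHomogeneous 1)
    (hl0 : l ≠ 0) : Irreducible l := by
  refine irreducible_of_totalDegree_eq_one (hl.totalDegree hl0) fun x hx => ?_
  obtain ⟨m, hm⟩ := ne_zero_iff.1 hl0
  exact isUnit_iff_ne_zero.2 fun hx0 => hm (zero_dvd_iff.1 (hx0 ▸ hx m))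

lemma isRelPrime_of_linearIndependent_pair {l l' : MvPolynomial σ K} (hl : l.IsHomogeneous 1)
    (hl' : l'.IsHomogeneous 1) (hind : LinearIndependent K ![l, l']) : IsRelPrime l l' := by
  have hl0 : l ≠ 0 := hind.ne_zero 0
  have hl0' : l' ≠ 0 := hind.ne_zero 1
  rw [(irreducible_of_isHomogeneous_one hl hl0).isRelPrime_iff_not_dvd]
  rintro ⟨g, rfl⟩
  have hg0 : g ≠ 0 := right_ne_zero_of_mul hl0'
  have hdeg : g.totalDegree = 0 := by
    have hadd := totalDegree_mul_of_isDomain hl0 hg0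
    rw [hl'.totalDegree hl0', hl.totalDegree hl0] at hadd
    lia
  rw [totalDegree_eq_zero_iff_eq_C.1 hdeg, mul_comm, ← smul_eq_C_mul] at hind
  exact (LinearIndependent.pair_iff' hl0).1 hind _ rfl

end LinearForms

section HyperplaneExpansion

variable {R σ : Type*} [CommRing R] {l f : MvPolynomial σ R} {μ : σ → R}

/-- When `l(μ) = 1`, the pullback of the restriction of a linear form `f` to the hyperplane `l = 0`
under the linear projection `x ↦ x - l(x) μ` onto this hyperplane. -/
def projectAlong (l : MvPolynomial σ R) (μ : σ → R) (f : MvPolynomial σ R) : MvPolynomial σ R :=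
  f - eval μ f • l

/-- The expansion of a polynomial `f` in powers of a linear form `l` with `l(μ) = 1`, as the
polynomial `f(x - l(x) μ + t μ)` in a new variable `t` standing for `l`. -/
def hyperplaneExpansion (l : MvPolynomial σ R) (μ : σ → R) :
    MvPolynomial σ R →ₐ[R] Polynomial (MvPolynomial σ R) :=
  aeval fun j => Polynomial.C (projectAlong l μ (X j)) + μ j • Polynomial.X

lemma isHomogeneous_projectAlong (hl : l.IsHomogeneous 1) (hf : f.IsHomogeneous 1) :
    (projectAlong l μ f).IsHomogeneous 1 :=
  hf.sub ((homogeneousSubmodule σ R 1).smul_mem _ hl)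

lemma hyperplaneExpansion_of_isHomogeneous_one (hf : f.IsHomogeneous 1) :
    hyperplaneExpansion l μ f =
      Polynomial.C (projectAlong l μ f) + eval μ f • Polynomial.X := by
  rw [← mem_homogeneousSubmodule, homogeneousSubmodule_one_eq_span_X] at hf
  induction hf using Submodule.span_induction with
  | mem x hx => obtain ⟨j, rfl⟩ := hx; simp [hyperplaneExpansion]
  | zero => simp [projectAlong]
  | add f g _ _ hf hg =>
    simp only [map_add, hf, hg, projectAlong, add_smul, map_sub]
    ring
  | smul a f _ hf => simp [hf, projectAlong, smul_eval, mul_smul, ← Polynomial.smul_C, smul_sub]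

lemma eval_hyperplaneExpansion (l f : MvPolynomial σ R) (μ : σ → R) :
    (hyperplaneExpansion l μ f).eval l = f := by
  have heval : ((Polynomial.aeval l).restrictScalars R).comp (hyperplaneExpansion l μ) =
      AlgHom.id R (MvPolynomial σ R) := by
    ext j
    simp [hyperplaneExpansion, projectAlong]
  simpa [Polynomial.coe_aeval_eq_eval] using DFunLike.congr_fun heval f

lemma pow_natTrailingDegree_hyperplaneExpansion_dvd (l f : MvPolynomial σ R) (μ : σ → R) :
    l ^ (hyperplaneExpansion l μ f).natTrailingDegree ∣ f := by
  have hX : Polynomial.X ^ (hyperplaneExpansion l μ f).natTrailingDegree ∣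
      hyperplaneExpansion l μ f :=
    Polynomial.X_pow_dvd_iff.2 fun _ => Polynomial.coeff_eq_zero_of_lt_natTrailingDegree
  simpa [eval_hyperplaneExpansion] using Polynomial.eval_dvd (x := l) hX

lemma isHomogeneous_coeff_hyperplaneExpansion {d i j : ℕ} (hl : l.IsHomogeneous 1)
    (hf : f.IsHomogeneous d) (hij : i + j = d) :
    ((hyperplaneExpansion l μ f).coeff i).IsHomogeneous j := by
  have hexp : hyperplaneExpansion l μ f = optionEquivLeft R σ
      (aeval (fun k => rename some (projectAlong l μ (X k)) + μ k • X none) f) := by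
    rw [← AlgEquiv.coe_toAlgHom, ← AlgHom.comp_apply, comp_aeval, hyperplaneExpansion]
    simp [optionEquivLeft_X_none, optionEquivLeft_rename_some]
  have hform (k : σ) :
      (rename some (projectAlong l μ (X k)) + μ k • X none).IsHomogeneous 1 :=
    (isHomogeneous_projectAlong hl (isHomogeneous_X R k)).rename_isHomogeneous.add
      ((homogeneousSubmodule _ R 1).smul_mem _ (isHomogeneous_X R none))
  rw [hexp]
  exact isHomogeneous_coeff_optionEquivLeft (by simpa using hf.aeval _ hform) hij

lemma coeff_hyperplaneExpansion_mem_pow_sub {ι : Type*} {ℓ : ι → MvPolynomial σ R} {T : Set ι}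
    {k : ℕ} (hl : l.IsHomogeneous 1) (hℓ : ∀ j ∈ T, (ℓ j).IsHomogeneous 1) (hlμ : eval μ l = 1)
    (hf : f ∈ Ideal.span (insert l (ℓ '' T)) ^ k) (i : ℕ) :
    (hyperplaneExpansion l μ f).coeff i ∈
      Ideal.span ((fun j => projectAlong l μ (ℓ j)) '' T) ^ (k - i) := by
  set J := Ideal.span ((fun j => projectAlong l μ (ℓ j)) '' T)
  have hmap : (Ideal.span (insert l (ℓ '' T))).map (hyperplaneExpansion l μ) ≤
      J.map Polynomial.C ⊔ Ideal.span {Polynomial.X} := by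
    rw [Ideal.map_span, Ideal.span_le, Set.image_insert_eq, Set.insert_subset_iff]
    refine ⟨?_, ?_⟩
    · rw [hyperplaneExpansion_of_isHomogeneous_one hl]
      simpa [projectAlong, hlμ] using Ideal.mem_sup_right (Ideal.mem_span_singleton_self _)
    · rintro _ ⟨_, ⟨j, hj, rfl⟩, rfl⟩
      rw [hyperplaneExpansion_of_isHomogeneous_one (hℓ j hj)]
      refine Submodule.add_mem_sup (Ideal.mem_map_of_mem _ (Ideal.subset_span ⟨j, hj, rfl⟩)) ?_
      exact Submodule.smul_of_tower_mem _ _ (Ideal.mem_span_singleton_self _)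
  refine coeff_mem_pow_sub_of_mem_map_C_sup_span_X_pow (Ideal.pow_right_mono hmap k ?_) i
  rw [← Ideal.map_pow]
  exact Ideal.mem_map_of_mem _ hf

end HyperplaneExpansion

section StarSymbolicPower

variable {A ι : Type*} [CommRing A] {ℓ : ι → A} {U : Finset ι}

/-- The `k`-th symbolic power of the ideal of the star configuration of codimension `e` defined by
the `ℓ i` with `i ∈ U`. -/
def starSymbolicPower (ℓ : ι → A) (U : Finset ι) (e k : ℕ) : Ideal A :=
  ⨅ T ∈ U.powersetCard e, Ideal.span (ℓ '' (T : Set ι)) ^ k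

lemma mem_starSymbolicPower {e k : ℕ} {F : A} :
    F ∈ starSymbolicPower ℓ U e k ↔
      ∀ T ⊆ U, T.card = e → F ∈ Ideal.span (ℓ '' (T : Set ι)) ^ k := by
  simp [starSymbolicPower, Finset.mem_powersetCard]

lemma prod_pow_mem_starSymbolicPower (ℓ : ι → A) (U : Finset ι) (e m : ℕ) :
    (∏ i ∈ U, ℓ i) ^ m ∈ starSymbolicPower ℓ U e (e * m) := by
  classical
  refine mem_starSymbolicPower.2 fun T hTU hT => ?_
  have hprodT : ∏ i ∈ T, ℓ i ∈ Ideal.span (ℓ '' (T : Set ι)) ^ e := by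
    rw [← hT, ← Finset.prod_const]
    exact Ideal.prod_mem_prod fun i hi => Ideal.subset_span ⟨i, hi, rfl⟩
  rw [pow_mul, ← Finset.prod_sdiff hTU]
  exact Ideal.pow_mem_pow (Ideal.mul_mem_left _ _ hprodT) m

lemma starSymbolicPower_antitone (ℓ : ι → A) (U : Finset ι) (e : ℕ) :
    Antitone (starSymbolicPower ℓ U e) := fun _ _ h =>
  iInf₂_mono fun _ _ => Ideal.pow_le_pow_right h

end StarSymbolicPower

section GeneralPosition

variable {K σ ι : Type*} [Field K] {ℓ : ι → MvPolynomial σ K} {U : Finset ι} {r : ℕ}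

/-- The `ℓ i` with `i ∈ U` are linear forms, any `r` or fewer of which are linearly independent. -/
structure InGeneralPosition (ℓ : ι → MvPolynomial σ K) (U : Finset ι) (r : ℕ) : Prop where
  isHomogeneous : ∀ i ∈ U, (ℓ i).IsHomogeneous 1
  linearIndepOn : ∀ T ⊆ U, T.card ≤ r → LinearIndepOn K ℓ (T : Set ι)

namespace InGeneralPosition

lemma ne_zero (hℓ : InGeneralPosition ℓ U r) (hr : 1 ≤ r) {i : ι} (hi : i ∈ U) : ℓ i ≠ 0 :=
  (hℓ.linearIndepOn {i} (by simpa using hi) (by simpa using hr)).ne_zero (by simp)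

lemma isRelPrime (hℓ : InGeneralPosition ℓ U r) (hr : 2 ≤ r) {i j : ι} (hi : i ∈ U) (hj : j ∈ U)
    (hij : i ≠ j) : IsRelPrime (ℓ i) (ℓ j) := by
  classical
  have hpair := hℓ.linearIndepOn {i, j} (by simp [Finset.insert_subset_iff, hi, hj])
    (Finset.card_le_two.trans hr)
  refine isRelPrime_of_linearIndependent_pair (hℓ.isHomogeneous i hi) (hℓ.isHomogeneous j hj) ?_
  rw [Finset.coe_pair] at hpair
  exact LinearIndependent.pair_iff.2 ((LinearIndepOn.pair_iff _ hij).1 hpair)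

lemma projectAlong_erase [DecidableEq ι] (hℓ : InGeneralPosition ℓ U (r + 1)) {i : ι} (hi : i ∈ U)
    (μ : σ → K) :
    InGeneralPosition (fun j => projectAlong (ℓ i) μ (ℓ j)) (U.erase i) r where
  isHomogeneous j hj := isHomogeneous_projectAlong (hℓ.isHomogeneous i hi)
    (hℓ.isHomogeneous j (Finset.mem_of_mem_erase hj))
  linearIndepOn T hT hTr := by
    have hiT : i ∉ T := fun h => Finset.notMem_erase i U (hT h)
    have hinsert := hℓ.linearIndepOn (insert i T)
      (Finset.insert_subset hi (hT.trans (U.erase_subset i)))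
      (Finset.card_insert_of_notMem hiT ▸ Nat.succ_le_succ hTr)
    rw [Finset.coe_insert] at hinsert
    exact linearIndepOn_sub_smul_of_insert (by simpa using hiT) hinsert _

lemma sum_le_of_pow_dvd (hℓ : InGeneralPosition ℓ U r) (hr : 2 ≤ r) {F : MvPolynomial σ K} {d : ℕ}
    (hF : F.IsHomogeneous d) (hF0 : F ≠ 0) {a : ι → ℕ} (ha : ∀ i ∈ U, ℓ i ^ a i ∣ F) :
    ∑ i ∈ U, a i ≤ d := by
  have hdvd : ∏ i ∈ U, ℓ i ^ a i ∣ F :=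
    Finset.prod_dvd_of_isRelPrime
      (fun i hi j hj hij => (hℓ.isRelPrime hr hi hj hij).pow) ha
  have hprod : (∏ i ∈ U, ℓ i ^ a i).IsHomogeneous (∑ i ∈ U, a i) :=
    IsHomogeneous.prod _ _ _ fun i hi => by simpa using (hℓ.isHomogeneous i hi).pow (a i)
  exact degree_le_degree_of_dvd hprod hF hF0 hdvd

lemma exists_pow_dvd_exists_mem_starSymbolicPower_erase [DecidableEq ι]
    (hℓ : InGeneralPosition ℓ U (r + 1)) {i : ι} (hi : i ∈ U) {e k d : ℕ} {F : MvPolynomial σ K}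
    (hF : F.IsHomogeneous d) (hF0 : F ≠ 0) (hFk : F ∈ starSymbolicPower ℓ U (e + 1) k) :
    ∃ a, ℓ i ^ a ∣ F ∧ ∃ ℓ' : ι → MvPolynomial σ K, InGeneralPosition ℓ' (U.erase i) r ∧
      ∃ G ∈ starSymbolicPower ℓ' (U.erase i) e (k - a),
        G ≠ 0 ∧ ∃ n, a + n = d ∧ G.IsHomogeneous n := by
  have hi1 := hℓ.isHomogeneous i hi
  obtain ⟨μ, hμ⟩ := exists_eval_eq_one_of_isHomogeneous_one hi1 (hℓ.ne_zero (by lia) hi)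
  set p := hyperplaneExpansion (ℓ i) μ F with hp
  have hp0 : p ≠ 0 := fun h => hF0 <| by
    rw [← eval_hyperplaneExpansion (ℓ i) F μ, ← hp, h, Polynomial.eval_zero]
  have hdvd : ℓ i ^ p.natTrailingDegree ∣ F := pow_natTrailingDegree_hyperplaneExpansion_dvd _ _ _
  have had : p.natTrailingDegree ≤ d :=
    degree_le_degree_of_dvd (by simpa using hi1.pow p.natTrailingDegree) hF hF0 hdvd
  obtain ⟨n, hn⟩ := Nat.exists_eq_add_of_le had
  refine ⟨p.natTrailingDegree, hdvd, _, hℓ.projectAlong_erase hi μ, p.trailingCoeff, ?_,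
    Polynomial.trailingCoeff_nonzero_iff_nonzero.2 hp0, n, hn.symm,
    isHomogeneous_coeff_hyperplaneExpansion hi1 hF hn.symm⟩
  refine mem_starSymbolicPower.2 fun T hT hTe => ?_
  have hiT : i ∉ T := fun h => Finset.notMem_erase i U (hT h)
  have hTU := hT.trans (U.erase_subset i)
  have hFT := mem_starSymbolicPower.1 hFk (insert i T) (Finset.insert_subset hi hTU)
    (by rw [Finset.card_insert_of_notMem hiT, hTe])
  rw [Finset.coe_insert, Set.image_insert_eq] at hFT
  exact coeff_hyperplaneExpansion_mem_pow_sub hi1 (fun j hj => hℓ.isHomogeneous j (hTU hj)) hμ hFT _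

lemma card_mul_le_of_mem_starSymbolicPower_one (hℓ : InGeneralPosition ℓ U r) (hr : 2 ≤ r)
    {k d : ℕ} {F : MvPolynomial σ K} (hF : F.IsHomogeneous d) (hF0 : F ≠ 0)
    (hFk : F ∈ starSymbolicPower ℓ U 1 k) : U.card * k ≤ d := by
  have hdvd : ∀ i ∈ U, ℓ i ^ k ∣ F := fun i hi => by
    have hFi := mem_starSymbolicPower.1 hFk {i} (by simpa using hi) (by simp)
    rwa [Finset.coe_singleton, Set.image_singleton, Ideal.span_singleton_pow,
      Ideal.mem_span_singleton] at hFi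
  simpa using hℓ.sum_le_of_pow_dvd hr hF hF0 (a := fun _ => k) hdvd

lemma card_mul_le_mul_of_mem_starSymbolicPower {e : ℕ} (he : 1 ≤ e)
    (hℓ : InGeneralPosition ℓ U (e + 1)) (heU : e ≤ U.card) {k d : ℕ} {F : MvPolynomial σ K}
    (hF : F.IsHomogeneous d) (hF0 : F ≠ 0) (hFk : F ∈ starSymbolicPower ℓ U e k) :
    U.card * k ≤ d * e := by
  classical
  induction e, he using Nat.le_induction generalizing ℓ U k d F with
  | base => simpa using hℓ.card_mul_le_of_mem_starSymbolicPower_one le_rfl hF hF0 hFk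
  | succ e he ih =>
    obtain ⟨m, hm⟩ : ∃ m, U.card = m + 1 := Nat.exists_eq_add_of_le' (by lia)
    have hbound : ∀ i ∈ U, ∃ a, ℓ i ^ a ∣ F ∧ m * k + a * e ≤ d * e + m * a := by
      intro i hi
      obtain ⟨a, hdvd, ℓ', hℓ', G, hGk, hG0, n, rfl, hG⟩ :=
        hℓ.exists_pow_dvd_exists_mem_starSymbolicPower_erase hi hF hF0 hFk
      have hcard : (U.erase i).card = m := by rw [Finset.card_erase_of_mem hi, hm]; rfl
      have hrestrict : m * (k - a) ≤ n * e := hcard ▸ ih hℓ' (by lia) hG hG0 hGk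
      refine ⟨a, hdvd, ?_⟩
      calc m * k + a * e ≤ m * (k - a + a) + a * e := by gcongr; lia
        _ ≤ (a + n) * e + m * a := by linarith
    choose! a hdvd hle using hbound
    have hsum : (m + 1) * (m * k) + (∑ i ∈ U, a i) * e ≤
        (m + 1) * (d * e) + m * ∑ i ∈ U, a i := by
      simpa [Finset.sum_add_distrib, Finset.sum_mul, Finset.mul_sum, hm] using
        Finset.sum_le_sum hle
    have had : ∑ i ∈ U, a i ≤ d := hℓ.sum_le_of_pow_dvd (by lia) hF hF0 hdvd
    obtain ⟨c, rfl⟩ : ∃ c, m = e + c := Nat.exists_eq_add_of_le (by lia)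
    have hmul : (e + c) * ((e + c + 1) * k) ≤ (e + c) * (d * (e + 1)) := by
      linarith [Nat.mul_le_mul_left c had]
    exact hm ▸ Nat.le_of_mul_le_mul_left hmul (by lia)

end InGeneralPosition

end GeneralPosition

section Alpha

variable {K σ : Type*} [Field K] {J : Ideal (MvPolynomial σ K)} {f : MvPolynomial σ K} {d : ℕ}

lemma alpha_le_of_mem (hfJ : f ∈ J) (hf0 : f ≠ 0) (hf : f.IsHomogeneous d) : alpha J ≤ d :=
  Nat.sInf_le ⟨f, hfJ, hf0, hf⟩

lemma exists_isHomogeneous_alpha (hfJ : f ∈ J) (hf0 : f ≠ 0) (hf : f.IsHomogeneous d) :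
    ∃ g ∈ J, g ≠ 0 ∧ g.IsHomogeneous (alpha J) :=
  Nat.sInf_mem (s := {d | ∃ f ∈ J, f ≠ 0 ∧ f.IsHomogeneous d}) ⟨d, f, hfJ, hf0, hf⟩

end Alpha

namespace InGeneralPosition

variable {K σ ι : Type*} [Field K] {ℓ : ι → MvPolynomial σ K} {U : Finset ι} {e r : ℕ}

lemma prod_ne_zero (hℓ : InGeneralPosition ℓ U r) (hr : 1 ≤ r) : ∏ i ∈ U, ℓ i ≠ 0 :=
  Finset.prod_ne_zero_iff.2 fun _ hi => hℓ.ne_zero hr hi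

lemma isHomogeneous_prod (hℓ : InGeneralPosition ℓ U r) :
    (∏ i ∈ U, ℓ i).IsHomogeneous U.card := by
  simpa using IsHomogeneous.prod U ℓ (fun _ => 1) hℓ.isHomogeneous

lemma alpha_starSymbolicPower_self_le (hℓ : InGeneralPosition ℓ U r) (hr : 1 ≤ r) (e : ℕ) :
    alpha (starSymbolicPower ℓ U e e) ≤ U.card :=
  alpha_le_of_mem (by simpa using prod_pow_mem_starSymbolicPower ℓ U e 1) (hℓ.prod_ne_zero hr)
    hℓ.isHomogeneous_prod

lemma card_mul_le_alpha_starSymbolicPower_mul (hℓ : InGeneralPosition ℓ U (e + 1)) (he : 1 ≤ e)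
    (heU : e ≤ U.card) (k : ℕ) : U.card * k ≤ alpha (starSymbolicPower ℓ U e k) * e := by
  have hmem : (∏ i ∈ U, ℓ i) ^ k ∈ starSymbolicPower ℓ U e k :=
    starSymbolicPower_antitone ℓ U e (Nat.le_mul_of_pos_left k he)
      (prod_pow_mem_starSymbolicPower ℓ U e k)
  obtain ⟨g, hgk, hg0, hg⟩ := exists_isHomogeneous_alpha hmem
    (pow_ne_zero k (hℓ.prod_ne_zero (by lia))) (hℓ.isHomogeneous_prod.pow k)
  exact hℓ.card_mul_le_mul_of_mem_starSymbolicPower he heU hg hg0 hgk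

end InGeneralPosition

theorem waldschmidt_star_configuration_general {K σ ι : Type*} [Field K]
    {ℓ : ι → MvPolynomial σ K} {U : Finset ι} {e : ℕ} (he : 1 ≤ e) (heU : e ≤ U.card)
    (hℓ : InGeneralPosition ℓ U (e + 1)) :
    ⨅ k : ℕ+, (alpha (starSymbolicPower ℓ U e k) : ℝ) / ((k : ℕ) : ℝ) = (U.card : ℝ) / (e : ℝ) := by
  apply le_antisymm
  · refine (ciInf_le ⟨0, ?_⟩ (⟨e, he⟩ : ℕ+)).trans ?_
    · rintro _ ⟨k, rfl⟩
      positivity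
    · rw [PNat.mk_coe]
      gcongr
      exact hℓ.alpha_starSymbolicPower_self_le (by lia) e
  · refine le_ciInf fun k => ?_
    rw [div_le_div_iff₀ (by exact_mod_cast he) (by exact_mod_cast k.pos)]
    exact_mod_cast hℓ.card_mul_le_alpha_starSymbolicPower_mul he heU k

/-- Let `I` be the defining ideal of the star configuration `S_N(e,s)`
in `ℙ^N`, built from `s` hyperplanes whose defining linear forms are in general position
(any at most `N+1` of them are linearly independent), where `1 ≤ e ≤ min(N,s)`.  Its
`t`-th symbolic power is `I^{(t)} = ⋂_{|T| = e} (span (ℓ '' T))^t`.  Then the Waldschmidt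
constant of `I`, namely `inf_{k ≥ 1} α(I^{(k)})/k`, equals `s/e`. -/
theorem waldschmidt_star_configuration
    {kk : Type*} [Field kk] [IsAlgClosed kk]
    (N s e : ℕ) (he : 1 ≤ e) (heN : e ≤ N) (hes : e ≤ s)
    (ℓ : Fin s → MvPolynomial (Fin (N + 1)) kk)
    (hdeg : ∀ i, (ℓ i).IsHomogeneous 1)
    (hgen : ∀ T : Finset (Fin s), T.card ≤ N + 1 →
      LinearIndependent kk (fun i : T => ℓ (i : Fin s))) :
    ⨅ k : ℕ+, (alpha (⨅ (T : Finset (Fin s)) (_ : T.card = e),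
        (Ideal.span (ℓ '' (T : Set (Fin s)))) ^ (k : ℕ)) : ℝ) / ((k : ℕ) : ℝ)
      = (s : ℝ) / (e : ℝ) := by
  simpa [starSymbolicPower] using waldschmidt_star_configuration_general (U := Finset.univ) he
    (by simpa using hes) ⟨fun i _ => hdeg i, fun T _ hT => hgen T (by lia)⟩
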